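/- Fix j ∈ {1,…,n} and let (ν,s), (ν',s') ∈ ℝ^d × ℝ satisfy: (a) ⟨ν,e_i⟩ > 0 and ⟨ν',e_i⟩ > 0 for all i; (b) for every r ∈ {1,…,j}, an r-element subset S ⊆ {1,…,n} satisfies Σ_{i∈S}⟨ν,e_i⟩ = ord_{C_r}(ν) if and only if it satisfies Σ_{i∈S}⟨ν',e_i⟩ = ord_{C_r}(ν') (ν and ν' define the same face of the Newton polyhedron of C_r); (c) φ_j(ν) ≤ s, and s < φ_{j+1}(ν) in case j < n; (d) φ_j(ν') ≤ s', and s' < φ_{j+1}(ν') in case j < n. Then {i : ⟨ν,e_i⟩ ≤ s} = {i : ⟨ν',e_i⟩ ≤ s'}. Consequently, if the e_i lie in ℤ^d, the subgroup M_ν^s of ℤ^d and the ℚ-subspace ℓ_ν^s coincide with M_{ν'}^{s'} and ℓ_{ν'}^{s'}; in particular the rank l(ν,s) and the index q(ν,s) agree for (ν,s) and (ν',s'). -/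

import Mathlib

/-- Support function of the Newton polyhedron of the `j`-th ideal of sums of
combinations, for integral vectors `e`. -/
noncomputable def ordC {d n : ℕ} (e : Fin n → Fin d → ℤ) (j : ℕ) (ν : Fin d → ℝ) : ℝ :=
  sInf {x : ℝ | ∃ S : Finset (Fin n), S.card = j ∧ x = ∑ i ∈ S, ∑ k, ν k * (e i k : ℝ)}

/-- `φ_j := ord_{C_j} − ord_{C_{j−1}}` (with `ord_{C_0} = 0`). -/
noncomputable def phiC {d n : ℕ} (e : Fin n → Fin d → ℤ) (j : ℕ) (ν : Fin d → ℝ) : ℝ :=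
  ordC e j ν - ordC e (j - 1) ν

theorem finite_setOf_sum_card_eq {d n : ℕ} (e : Fin n → Fin d → ℤ) (j : ℕ) (ν : Fin d → ℝ) :
    {x : ℝ | ∃ S : Finset (Fin n), S.card = j ∧
      x = ∑ i ∈ S, ∑ k, ν k * (e i k : ℝ)}.Finite := by
  refine (Set.finite_range
    fun S : Finset (Fin n) => ∑ i ∈ S, ∑ k, ν k * (e i k : ℝ)).subset ?_
  rintro x ⟨S, -, rfl⟩
  exact ⟨S, rfl⟩

theorem ordC_card_le_sum {d n : ℕ} (e : Fin n → Fin d → ℤ) (ν : Fin d → ℝ)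
    (S : Finset (Fin n)) : ordC e S.card ν ≤ ∑ i ∈ S, ∑ k, ν k * (e i k : ℝ) :=
  csInf_le (finite_setOf_sum_card_eq e S.card ν).bddBelow ⟨S, rfl, rfl⟩

theorem exists_sum_eq_ordC {d n : ℕ} (e : Fin n → Fin d → ℤ) {j : ℕ} (hj : j ≤ n)
    (ν : Fin d → ℝ) :
    ∃ S : Finset (Fin n), S.card = j ∧ ∑ i ∈ S, ∑ k, ν k * (e i k : ℝ) = ordC e j ν := by
  obtain ⟨T, -, hT⟩ := Finset.exists_subset_card_eq
    (s := (Finset.univ : Finset (Fin n))) (n := j) (by simpa using hj)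
  have hne : {x : ℝ | ∃ S : Finset (Fin n), S.card = j ∧
      x = ∑ i ∈ S, ∑ k, ν k * (e i k : ℝ)}.Nonempty := ⟨_, T, hT, rfl⟩
  obtain ⟨S, hS, h⟩ := hne.csInf_mem (finite_setOf_sum_card_eq e j ν)
  exact ⟨S, hS, h.symm⟩

/-- If `φ_j(ν) ≤ s < φ_{j+1}(ν)`, then every `j`-element subset attaining `ord_{C_j}(ν)` is
the sublevel set `{i | ⟨ν, e_i⟩ ≤ s}`. -/
theorem sublevel_eq_of_sum_eq_ordC {d n : ℕ} (e : Fin n → Fin d → ℤ) (ν : Fin d → ℝ) {s : ℝ}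
    {S : Finset (Fin n)} (hS : ∑ i ∈ S, ∑ k, ν k * (e i k : ℝ) = ordC e S.card ν)
    (hle : phiC e S.card ν ≤ s) (hlt : S.card < n → s < phiC e (S.card + 1) ν) :
    {i : Fin n | ∑ k, ν k * (e i k : ℝ) ≤ s} = S := by
  ext i
  simp only [Set.mem_ofPred_eq, Finset.mem_coe]
  constructor
  · intro hi
    by_contra hiS
    have hcard : S.card < n := by
      simpa using Finset.card_lt_univ_of_notMem hiS
    have hs := hlt hcard
    have hord := ordC_card_le_sum e ν (insert i S)
    rw [Finset.card_insert_of_notMem hiS, Finset.sum_insert hiS] at hord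
    simp only [phiC, Nat.add_sub_cancel] at hs
    linarith
  · intro hiS
    have hord := ordC_card_le_sum e ν (S.erase i)
    rw [Finset.card_erase_of_mem hiS] at hord
    have hsum := Finset.add_sum_erase S (fun i => ∑ k, ν k * (e i k : ℝ)) hiS
    simp only [phiC] at hle
    linarith

theorem stmt5 (d n : ℕ) (e : Fin n → Fin d → ℤ)
    (j : ℕ) (hj1 : 1 ≤ j) (hjn : j ≤ n)
    (ν ν' : Fin d → ℝ) (s s' : ℝ)
    (ha : ∀ i, 0 < ∑ k, ν k * (e i k : ℝ)) (ha' : ∀ i, 0 < ∑ k, ν' k * (e i k : ℝ))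
    (hb : ∀ r : ℕ, 1 ≤ r → r ≤ j → ∀ S : Finset (Fin n), S.card = r →
      ((∑ i ∈ S, ∑ k, ν k * (e i k : ℝ)) = ordC e r ν ↔
        (∑ i ∈ S, ∑ k, ν' k * (e i k : ℝ)) = ordC e r ν'))
    (hc1 : phiC e j ν ≤ s) (hc2 : j < n → s < phiC e (j + 1) ν)
    (hd1 : phiC e j ν' ≤ s') (hd2 : j < n → s' < phiC e (j + 1) ν') :
    {i : Fin n | ∑ k, ν k * (e i k : ℝ) ≤ s} = {i : Fin n | ∑ k, ν' k * (e i k : ℝ) ≤ s'} ∧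
    AddSubgroup.closure {x : Fin d → ℤ | ∃ i, (∑ k, ν k * (e i k : ℝ)) ≤ s ∧ x = e i} =
      AddSubgroup.closure {x : Fin d → ℤ | ∃ i, (∑ k, ν' k * (e i k : ℝ)) ≤ s' ∧ x = e i} ∧
    Submodule.span ℚ {x : Fin d → ℚ |
        ∃ i, (∑ k, ν k * (e i k : ℝ)) ≤ s ∧ x = fun kk => (e i kk : ℚ)} =
      Submodule.span ℚ {x : Fin d → ℚ |
        ∃ i, (∑ k, ν' k * (e i k : ℝ)) ≤ s' ∧ x = fun kk => (e i kk : ℚ)} := by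
  obtain ⟨S, rfl, hS⟩ := exists_sum_eq_ordC e hjn ν
  have hS' := (hb S.card hj1 le_rfl S rfl).1 hS
  have hset : {i : Fin n | ∑ k, ν k * (e i k : ℝ) ≤ s} =
      {i : Fin n | ∑ k, ν' k * (e i k : ℝ) ≤ s'} :=
    (sublevel_eq_of_sum_eq_ordC e ν hS hc1 hc2).trans
      (sublevel_eq_of_sum_eq_ordC e ν' hS' hd1 hd2).symm
  have hiff : ∀ i, ∑ k, ν k * (e i k : ℝ) ≤ s ↔ ∑ k, ν' k * (e i k : ℝ) ≤ s' :=
    Set.ext_iff.1 hset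
  exact ⟨hset, by simp only [hiff], by simp only [hiff]⟩
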